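/- Let A be a complex N×N matrix and h a complex number such that the matrices I - hA and I - (h/2)A are invertible, and define M = (I - hA)^{-1} ( I + (h/6)A - (5h/6) A (I - hA)^{-1} - (2h/3) A ((h/2)A - I)^{-1} ( I + (h/4)A - (h/4) A (I - hA)^{-1} ) ). Then for every eigenvector v of A with eigenvalue λ (so 1 - hλ ≠ 0 and 2 - hλ ≠ 0), one has M v = R(hλ) v, where R(z) = (z^3 + 18z - 12)/(6(1-z)^2(z-2)). -/

import Mathlib

/-- An eigenvector of an invertible matrix has nonzero eigenvalue, and it is an eigenvector of the
inverse for the reciprocal eigenvalue. -/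
theorem Matrix.ne_zero_and_inv_mulVec_of_isUnit {n K : Type*} [Fintype n] [DecidableEq n] [Field K]
    {B : Matrix n n K} (hB : IsUnit B) {v : n → K} (hv : v ≠ 0) {c : K}
    (hc : B.mulVec v = c • v) : c ≠ 0 ∧ B⁻¹.mulVec v = c⁻¹ • v := by
  have hinv : v = c • B⁻¹.mulVec v := by
    rw [← Matrix.mulVec_smul, ← hc, Matrix.mulVec_mulVec,
      Matrix.nonsing_inv_mul _ ((Matrix.isUnit_iff_isUnit_det B).mp hB), Matrix.one_mulVec]
  have hc0 : c ≠ 0 := by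
    rintro rfl
    exact hv (by simpa using hinv)
  exact ⟨hc0, (eq_inv_smul_iff₀ hc0).mpr hinv.symm⟩

/-- Let `A` be a complex `N×N` matrix and `h` a complex number such that
`I - hA` and `I - (h/2)A` are invertible, and let `M` be the Jacobian of the
MPRK(3,2) map at a steady state, namely
`M = (I - hA)⁻¹ ( I + (h/6)A - (5h/6) A (I - hA)⁻¹
      - (2h/3) A ((h/2)A - I)⁻¹ ( I + (h/4)A - (h/4) A (I - hA)⁻¹ ) )`.
Then for every eigenvector `v` of `A` with eigenvalue `λ` one has
`1 - hλ ≠ 0`, `2 - hλ ≠ 0`, and `M v = R(hλ) v` where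
`R(z) = (z^3 + 18z - 12)/(6(1-z)^2(z-2))`. -/
theorem mprk32_jacobian_eigenvector {N : ℕ} (A : Matrix (Fin N) (Fin N) ℂ)
    (h : ℂ)
    (h1 : IsUnit (1 - h • A)) (h2 : IsUnit (1 - (h / 2) • A))
    (M : Matrix (Fin N) (Fin N) ℂ)
    (hM : M = (1 - h • A)⁻¹ *
      (1 + (h / 6) • A - (5 * h / 6) • (A * (1 - h • A)⁻¹) -
        (2 * h / 3) • (A * ((h / 2) • A - 1)⁻¹ *
          (1 + (h / 4) • A - (h / 4) • (A * (1 - h • A)⁻¹)))))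
    (v : Fin N → ℂ) (lam : ℂ) (hv : v ≠ 0) (heig : A.mulVec v = lam • v) :
    1 - h * lam ≠ 0 ∧ 2 - h * lam ≠ 0 ∧
      M.mulVec v = (((h * lam) ^ 3 + 18 * (h * lam) - 12) /
        (6 * (1 - h * lam) ^ 2 * (h * lam - 2))) • v := by
  obtain ⟨hz1, hinv1⟩ := Matrix.ne_zero_and_inv_mulVec_of_isUnit h1 hv (c := 1 - h * lam) (by
    rw [Matrix.sub_mulVec, Matrix.smul_mulVec, heig, Matrix.one_mulVec]
    module)
  have h2' : IsUnit ((h / 2) • A - 1) := by simpa using h2.neg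
  obtain ⟨hz2, hinv2⟩ := Matrix.ne_zero_and_inv_mulVec_of_isUnit h2' hv (c := h / 2 * lam - 1) (by
    rw [Matrix.sub_mulVec, Matrix.smul_mulVec, heig, Matrix.one_mulVec]
    module)
  have hz2' : h * lam - 2 ≠ 0 := fun h0 => hz2 (by linear_combination h0 / 2)
  refine ⟨hz1, fun h0 => hz2' (by linear_combination -h0), ?_⟩
  have hb : (h / 2 * lam - 1)⁻¹ = 2 / (h * lam - 2) := by
    field_simp
  rw [hb] at hinv2
  simp only [hM, ← Matrix.mulVec_mulVec, Matrix.sub_mulVec, Matrix.add_mulVec, Matrix.smul_mulVec,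
    Matrix.one_mulVec, Matrix.mulVec_sub, Matrix.mulVec_add, Matrix.mulVec_smul, heig, hinv1, hinv2]
  match_scalars
  field_simp
  ring
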